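/- Let n ≥ 2 and let x ∈ M_n be a colored diameter (red or blue). Then there exists a bijection from the set L(x) = {y ∈ M_n : y ≠ x and y is compatible with x} to the set of diagonals of a convex (n+2)-gon such that two distinct elements of L(x) are compatible if and only if their image diagonals do not cross. (That is, the link of a diameter in the type D_n model is isomorphic to the type A_{n−1} model.) -/

import Mathlib

open Pointwise

namespace GalD

/-- A polytope in `ℝ^d`: the convex hull of a finite set of points. -/
def IsPolytope {d : ℕ} (P : Set (Fin d → ℝ)) : Prop :=
  ∃ V : Finset (Fin d → ℝ), P = convexHull ℝ (V : Set (Fin d → ℝ))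

/-- A face of `P`: a nonempty exposed face of `P` (`P` itself included). -/
def IsFaceOf {d : ℕ} (F P : Set (Fin d → ℝ)) : Prop :=
  F.Nonempty ∧ IsExposed ℝ P F

/-- The dimension of a set: the rank of the direction of its affine span. -/
noncomputable def polyDim {d : ℕ} (P : Set (Fin d → ℝ)) : ℕ :=
  Module.finrank ℝ (affineSpan ℝ P).direction

/-- A facet: a face of dimension `dim P - 1`. -/
def IsFacetOf {d : ℕ} (F P : Set (Fin d → ℝ)) : Prop :=
  IsFaceOf F P ∧ polyDim F + 1 = polyDim P

/-- A vertex: a point spanning a face of dimension 0. -/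
def IsVertexOf {d : ℕ} (v : Fin d → ℝ) (P : Set (Fin d → ℝ)) : Prop :=
  IsFaceOf {v} P

/-- A simple polytope: every vertex is contained in exactly `dim P` facets. -/
def IsSimplePolytope {d : ℕ} (P : Set (Fin d → ℝ)) : Prop :=
  IsPolytope P ∧ ∀ v, IsVertexOf v P →
    {F : Set (Fin d → ℝ) | IsFacetOf F P ∧ v ∈ F}.ncard = polyDim P

/-- A flag polytope: simple, and every collection of pairwise intersecting facets
has a nonempty common intersection. -/
def IsFlagPolytope {d : ℕ} (P : Set (Fin d → ℝ)) : Prop :=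
  IsSimplePolytope P ∧
  ∀ 𝒮 : Set (Set (Fin d → ℝ)), 𝒮.Nonempty → (∀ F ∈ 𝒮, IsFacetOf F P) →
    (∀ F ∈ 𝒮, ∀ G ∈ 𝒮, (F ∩ G).Nonempty) → (⋂₀ 𝒮).Nonempty

/-- Combinatorial equivalence: an order isomorphism between the face posets. -/
def CombEquiv {d₁ d₂ : ℕ} (P : Set (Fin d₁ → ℝ)) (Q : Set (Fin d₂ → ℝ)) : Prop :=
  Nonempty ({F : Set (Fin d₁ → ℝ) // IsFaceOf F P} ≃o
            {G : Set (Fin d₂ → ℝ) // IsFaceOf G Q})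

/-- The product of a set in `ℝ^{d₁}` and a set in `ℝ^{d₂}`, inside `ℝ^{d₁+d₂}`. -/
def polyProd {d₁ d₂ : ℕ} (Q : Set (Fin d₁ → ℝ)) (R : Set (Fin d₂ → ℝ)) :
    Set (Fin (d₁ + d₂) → ℝ) :=
  {x | (fun i => x (Fin.castAdd d₂ i)) ∈ Q ∧ (fun j => x (Fin.natAdd d₁ j)) ∈ R}

/-- `P` is not combinatorially equivalent to a nontrivial product of two polytopes. -/
def Indecomposable {d : ℕ} (P : Set (Fin d → ℝ)) : Prop :=
  ¬ ∃ (d₁ d₂ : ℕ) (Q : Set (Fin d₁ → ℝ)) (R : Set (Fin d₂ → ℝ)),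
    IsPolytope Q ∧ IsPolytope R ∧ 1 ≤ polyDim Q ∧ 1 ≤ polyDim R ∧
    CombEquiv P (polyProd Q R)

/-- A building set on the ground set `V`. -/
structure IsBuildingSetOn {m : ℕ} (V : Finset (Fin m)) (B : Finset (Finset (Fin m))) :
    Prop where
  subset_ground : ∀ S ∈ B, S ⊆ V
  nonempty_mem : ∀ S ∈ B, S.Nonempty
  singleton_mem : ∀ i ∈ V, ({i} : Finset (Fin m)) ∈ B
  ground_mem : V ∈ B
  union_mem : ∀ S₁ ∈ B, ∀ S₂ ∈ B, (S₁ ∩ S₂).Nonempty → S₁ ∪ S₂ ∈ B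

/-- A connected building set on `[m]`. -/
def IsConnectedBuildingSet (m : ℕ) (B : Finset (Finset (Fin m))) : Prop :=
  IsBuildingSetOn (Finset.univ : Finset (Fin m)) B

/-- The nestohedron `P_B`: the Minkowski sum of the simplices `Δ_S`, `S ∈ B`. -/
noncomputable def nestohedron (m : ℕ) (B : Finset (Finset (Fin m))) :
    Set (Fin m → ℝ) :=
  ∑ S ∈ B, convexHull ℝ ((fun i => (Pi.single i 1 : Fin m → ℝ)) '' (S : Set (Fin m)))

/-- A diagonal of a convex `N`-gon with vertices labelled by `ZMod N`. -/
def IsDiag (N : ℕ) (e : Finset (ZMod N)) : Prop :=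
  ∃ a b : ZMod N, e = {a, b} ∧ b ≠ a ∧ b ≠ a + 1 ∧ b ≠ a - 1

/-- `c` lies strictly between `a` and `b` on the arc from `a` to `b` (counterclockwise). -/
def StrictBtw (N : ℕ) (a c b : ZMod N) : Prop :=
  0 < (c - a).val ∧ (c - a).val < (b - a).val

/-- Two diagonals cross: their endpoints alternate around the circle. -/
def Crosses (N : ℕ) (e f : Finset (ZMod N)) : Prop :=
  ∃ a b c d : ZMod N, e = {a, b} ∧ f = {c, d} ∧
    StrictBtw N a c b ∧ StrictBtw N b d a

/-- Image of a diagonal under the central symmetry `a ↦ a + n` of the `2n`-gon. -/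
def centralSym (n : ℕ) (e : Finset (ZMod (2 * n))) : Finset (ZMod (2 * n)) :=
  e.image (· + (n : ZMod (2 * n)))

/-- A diameter of the `2n`-gon: a diagonal `{a, a + n}`. -/
def IsDiameter (n : ℕ) (e : Finset (ZMod (2 * n))) : Prop :=
  ∃ a : ZMod (2 * n), e = {a, a + (n : ZMod (2 * n))}

/-- Raw elements of the type `D_n` model: symmetric pairs of diagonals,
red diameters and blue diameters. -/
inductive DElem (n : ℕ) where
  | pair : Finset (Finset (ZMod (2 * n))) → DElem n
  | red  : Finset (ZMod (2 * n)) → DElem n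
  | blue : Finset (ZMod (2 * n)) → DElem n

/-- Membership in the set `M_n` of the type `D_n` model. -/
def memM (n : ℕ) : DElem n → Prop
  | .pair s => ∃ e, IsDiag (2 * n) e ∧ ¬ IsDiameter n e ∧ s = {e, centralSym n e}
  | .red e => IsDiag (2 * n) e ∧ IsDiameter n e
  | .blue e => IsDiag (2 * n) e ∧ IsDiameter n e

/-- Compatibility of elements of the type `D_n` model. -/
def DCompat (n : ℕ) : DElem n → DElem n → Prop
  | .pair s, .pair t => ∀ e ∈ s, ∀ f ∈ t, ¬ Crosses (2 * n) e f
  | .pair s, .red e => ∀ f ∈ s, ¬ Crosses (2 * n) e f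
  | .pair s, .blue e => ∀ f ∈ s, ¬ Crosses (2 * n) e f
  | .red e, .pair s => ∀ f ∈ s, ¬ Crosses (2 * n) e f
  | .blue e, .pair s => ∀ f ∈ s, ¬ Crosses (2 * n) e f
  | .red _, .red _ => True
  | .blue _, .blue _ => True
  | .red e, .blue f => e = f
  | .blue e, .red f => e = f

/-- The set `M_n` of the type `D_n` model, as a type. -/
def MSet (n : ℕ) := {x : DElem n // memM n x}

/-- `P` realizes the type `D_n` model via the bijection `φ`. -/
def RealizesDWith (n : ℕ) {d : ℕ} (P : Set (Fin d → ℝ))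
    (φ : MSet n → Set (Fin d → ℝ)) : Prop :=
  IsPolytope P ∧ IsFlagPolytope P ∧ polyDim P = n ∧
  (∀ x, IsFacetOf (φ x) P) ∧ Function.Injective φ ∧
  (∀ F, IsFacetOf F P → ∃ x, φ x = F) ∧
  ∀ x y : MSet n, x ≠ y → ((φ x ∩ φ y).Nonempty ↔ DCompat n x.1 y.1)

/-- `P` realizes the type `D_n` model. -/
def RealizesD (n : ℕ) {d : ℕ} (P : Set (Fin d → ℝ)) : Prop :=
  ∃ φ, RealizesDWith n P φ

/-- Elements of the type `A_k` model: diagonals of a convex `(k+3)`-gon. -/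
def ASet (k : ℕ) := {e : Finset (ZMod (k + 3)) // IsDiag (k + 3) e}

/-- `P` realizes the type `A_k` model via the bijection `φ`. -/
def RealizesAWith (k : ℕ) {d : ℕ} (P : Set (Fin d → ℝ))
    (φ : ASet k → Set (Fin d → ℝ)) : Prop :=
  IsPolytope P ∧ IsFlagPolytope P ∧ polyDim P = k ∧
  (∀ x, IsFacetOf (φ x) P) ∧ Function.Injective φ ∧
  (∀ F, IsFacetOf F P → ∃ x, φ x = F) ∧
  ∀ x y : ASet k, x ≠ y → ((φ x ∩ φ y).Nonempty ↔ ¬ Crosses (k + 3) x.1 y.1)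

/-- `P` realizes the type `A_k` model. -/
def RealizesA (k : ℕ) {d : ℕ} (P : Set (Fin d → ℝ)) : Prop :=
  ∃ φ, RealizesAWith k P φ

/-- A closed halfspace in `ℝ^d`. -/
def IsClosedHalfspace {d : ℕ} (H : Set (Fin d → ℝ)) : Prop :=
  ∃ (l : (Fin d → ℝ) →ₗ[ℝ] ℝ) (c : ℝ), l ≠ 0 ∧ H = {x | l x ≤ c}

/-- `P'` is obtained from `P` by shaving off a face of codimension 2. -/
def ObtainedByShaving {d : ℕ} (P P' : Set (Fin d → ℝ)) : Prop :=
  ∃ G H : Set (Fin d → ℝ), IsFaceOf G P ∧ polyDim G + 2 = polyDim P ∧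
    IsClosedHalfspace H ∧ G ∩ H = ∅ ∧
    (∀ v, IsVertexOf v P → v ∉ G → v ∈ interior H) ∧ P' = P ∩ H

/-- The restriction `B|_S` of a building set. -/
def restrictBS {m : ℕ} (B : Finset (Finset (Fin m))) (S : Finset (Fin m)) :
    Finset (Finset (Fin m)) :=
  B.filter (· ⊆ S)

/-- The contraction `B / S` of a building set. -/
def contractBS {m : ℕ} (B : Finset (Finset (Fin m))) (S : Finset (Fin m)) :
    Finset (Finset (Fin m)) :=
  (B.filter (fun S'' => ¬ S'' ⊆ S)).image (fun S'' => S'' \ S)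

/-- The subset of the nestohedron `P_B` on which `x ↦ ∑_{i ∈ S} x i` is minimized. -/
def minFace (m : ℕ) (B : Finset (Finset (Fin m))) (S : Finset (Fin m)) :
    Set (Fin m → ℝ) :=
  {x ∈ nestohedron m B | ∀ y ∈ nestohedron m B, ∑ i ∈ S, x i ≤ ∑ i ∈ S, y i}

/-!
Let the given diameter be `{a, a + n}`. It cuts the `2n`-gon into two halves exchanged by the
central symmetry, so a symmetric pair of diagonals compatible with it is determined by its member
in the half with vertices `a, a + 1, …, a + n`. Add one apex, numbered `n + 1`, to this half to get
an `(n + 2)`-gon. Its diagonals inside the half are the symmetric pairs, its diagonal `{0, n}` is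
the given diameter in the opposite color, and its diagonal `{i, n + 1}` from the apex is the
diameter `{a + i, a + i + n}` in the given color. Numbering vertices from a base point turns
crossing of diagonals into interlacing of pairs of numbers, which this correspondence preserves.
-/

theorem finset_pair_eq_pair_iff {α : Type*} [DecidableEq α] {a b c d : α} :
    ({a, b} : Finset α) = {c, d} ↔ a = c ∧ b = d ∨ a = d ∧ b = c := by
  rw [← Finset.coe_inj]
  push_cast
  exact Set.pair_eq_pair_iff

/-! ### Chords of a polygon numbered from a base point -/

/-- The segment joining the vertices numbered `i` and `j` of an `N`-gon, counted from the base
point `a`. The numbers are not reduced modulo `N`. -/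
def chord {N : ℕ} (a : ZMod N) (i j : ℕ) : Finset (ZMod N) := {a + i, a + j}

/-- The pairs `{i, j}` and `{k, l}` of numbers alternate on the line. The formula assumes `i < j`
and `k < l`. -/
def Interlaced (i j k l : ℕ) : Prop := i < k ∧ k < j ∧ j < l ∨ k < i ∧ i < l ∧ l < j

section Chord

variable {N : ℕ} (a : ZMod N) {i j k l : ℕ}

theorem chord_comm (i j : ℕ) : chord a i j = chord a j i := Finset.pair_comm _ _

theorem chord_card_right (i : ℕ) : chord a i N = chord a 0 i := by
  simp [chord, Finset.pair_comm]

theorem natCast_eq_natCast_iff_of_lt_two_mul (hi : i < N) (hj : j < 2 * N) :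
    (i : ZMod N) = j ↔ i = j ∨ i + N = j := by
  have inj {k : ℕ} (hk : k < N) : (i : ZMod N) = k ↔ i = k :=
    (CharP.natCast_injOn_Iio (ZMod N) N).eq_iff hi hk
  rcases lt_or_ge j N with h | h
  · rw [inj h]
    omega
  · obtain ⟨k, rfl⟩ := Nat.exists_eq_add_of_le' h
    rw [Nat.cast_add, ZMod.natCast_self, add_zero, inj (by omega)]
    omega

theorem exists_eq_add_natCast [NeZero N] (u : ZMod N) : ∃ i < N, u = a + (i : ZMod N) :=
  ⟨(u - a).val, ZMod.val_lt _, by simp⟩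

theorem chord_eq_chord_iff (hij : i < j) (hj : j < N) (hkl : k < l) (hl : l < N) :
    chord a i j = chord a k l ↔ i = k ∧ j = l := by
  simp only [chord, finset_pair_eq_pair_iff, add_right_inj]
  repeat rw [natCast_eq_natCast_iff_of_lt_two_mul (by omega) (by omega)]
  omega

theorem val_natCast_sub_natCast (hi : i < N) (hk : k < N) :
    ((k : ZMod N) - i).val = if i ≤ k then k - i else k + N - i := by
  have hcast : (k : ZMod N) - i = ((if i ≤ k then k - i else k + N - i : ℕ) : ZMod N) := by
    split_ifs with h
    · rw [Nat.cast_sub h]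
    · rw [Nat.cast_sub (by omega), Nat.cast_add, ZMod.natCast_self, add_zero]
  rw [hcast, ZMod.val_cast_of_lt]
  split_ifs <;> omega

theorem strictBtw_add_natCast_iff (hi : i < N) (hk : k < N) (hj : j < N) :
    StrictBtw N (a + i) (a + k) (a + j) ↔ i < k ∧ k < j ∨ k < j ∧ j < i ∨ j < i ∧ i < k := by
  rw [StrictBtw, add_sub_add_left_eq_sub, add_sub_add_left_eq_sub,
    val_natCast_sub_natCast hi hk, val_natCast_sub_natCast hi hj]
  split_ifs <;> omega

theorem crosses_chord_iff (hij : i < j) (hj : j < N) (hkl : k < l) (hl : l < N) :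
    Crosses N (chord a i j) (chord a k l) ↔ Interlaced i j k l := by
  have hi := hij.trans hj
  have hk := hkl.trans hl
  constructor
  · rintro ⟨u, v, w, z, huv, hwz, hw, hz⟩
    rcases finset_pair_eq_pair_iff.1 huv with ⟨rfl, rfl⟩ | ⟨rfl, rfl⟩ <;>
    rcases finset_pair_eq_pair_iff.1 hwz with ⟨rfl, rfl⟩ | ⟨rfl, rfl⟩ <;>
    · simp only [strictBtw_add_natCast_iff, hi, hj, hk, hl] at hw hz
      unfold Interlaced
      omega
  · rintro (h | h)
    · refine ⟨a + i, a + j, a + k, a + l, rfl, rfl, ?_⟩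
      simp only [strictBtw_add_natCast_iff, hi, hj, hk, hl]
      omega
    · refine ⟨a + i, a + j, a + l, a + k, rfl, chord_comm a k l, ?_⟩
      simp only [strictBtw_add_natCast_iff, hi, hj, hk, hl]
      omega

theorem isDiag_pair_iff {u v : ZMod N} : IsDiag N {u, v} ↔ v ≠ u ∧ v ≠ u + 1 ∧ u ≠ v + 1 := by
  constructor
  · rintro ⟨b, c, h, hne, hsucc, hpred⟩
    rw [Ne, eq_sub_iff_add_eq, eq_comm] at hpred
    rcases finset_pair_eq_pair_iff.1 h with ⟨rfl, rfl⟩ | ⟨rfl, rfl⟩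
    · exact ⟨hne, hsucc, hpred⟩
    · exact ⟨hne.symm, hpred, hsucc⟩
  · rintro ⟨hne, hsucc, hpred⟩
    refine ⟨u, v, rfl, hne, hsucc, ?_⟩
    rwa [Ne, eq_sub_iff_add_eq, eq_comm]

theorem isDiag_chord_iff (hij : i < j) (hj : j < N) :
    IsDiag N (chord a i j) ↔ i + 2 ≤ j ∧ ¬ (i = 0 ∧ j + 1 = N) := by
  simp only [chord, isDiag_pair_iff, Ne, add_assoc, add_right_inj, ← Nat.cast_add_one]
  repeat rw [natCast_eq_natCast_iff_of_lt_two_mul (by omega) (by omega)]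
  omega

theorem IsDiag.exists_eq_chord [NeZero N] {e : Finset (ZMod N)} (he : IsDiag N e) :
    ∃ i j, i < j ∧ j < N ∧ e = chord a i j := by
  obtain ⟨u, v, rfl, hne, -⟩ := he
  obtain ⟨i, hi, rfl⟩ := exists_eq_add_natCast a u
  obtain ⟨j, hj, rfl⟩ := exists_eq_add_natCast a v
  have hne' : j ≠ i := fun h => hne (h ▸ rfl)
  rcases hne'.lt_or_gt with h | h
  · exact ⟨j, i, h, hi, chord_comm a i j⟩
  · exact ⟨i, j, h, hj, rfl⟩

/-- The diagonals of an `N`-gon with vertices numbered `0, …, N - 1`, each given by its endpoints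
in increasing order. -/
@[ext]
structure DiagIndex (N : ℕ) where
  fst : ℕ
  snd : ℕ
  add_two_le : fst + 2 ≤ snd
  lt : snd < N
  not_side : ¬ (fst = 0 ∧ snd + 1 = N)

theorem DiagIndex.fst_lt_snd (p : DiagIndex N) : p.fst < p.snd := by
  have := p.add_two_le
  omega

theorem DiagIndex.isDiag_chord (p : DiagIndex N) : IsDiag N (chord a p.fst p.snd) :=
  (isDiag_chord_iff a p.fst_lt_snd p.lt).2 ⟨p.add_two_le, p.not_side⟩

/-- Numbering the vertices from `a` identifies the diagonals of the `N`-gon with index pairs. -/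
noncomputable def diagEquiv [NeZero N] (a : ZMod N) :
    DiagIndex N ≃ {e : Finset (ZMod N) // IsDiag N e} :=
  Equiv.ofBijective (fun p => ⟨chord a p.fst p.snd, p.isDiag_chord a⟩) <| by
    constructor
    · intro p q h
      obtain ⟨hfst, hsnd⟩ := (chord_eq_chord_iff a p.fst_lt_snd p.lt q.fst_lt_snd q.lt).1
        (congrArg Subtype.val h)
      exact DiagIndex.ext hfst hsnd
    · rintro ⟨e, he⟩
      obtain ⟨i, j, hij, hj, rfl⟩ := he.exists_eq_chord a
      obtain ⟨hle, hside⟩ := (isDiag_chord_iff a hij hj).1 he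
      exact ⟨⟨i, j, hle, hj, hside⟩, rfl⟩

theorem crosses_diagEquiv_iff [NeZero N] (p q : DiagIndex N) :
    Crosses N (diagEquiv a p).1 (diagEquiv a q).1 ↔ Interlaced p.fst p.snd q.fst q.snd :=
  crosses_chord_iff a p.fst_lt_snd p.lt q.fst_lt_snd q.lt

end Chord

/-! ### The central symmetry of the `2n`-gon -/

section CentralSym

variable {n : ℕ}

theorem natCast_add_natCast_self : (n : ZMod (2 * n)) + n = 0 := by
  rw [← Nat.cast_add, ← two_mul, ZMod.natCast_self]

theorem centralSym_pair (u v : ZMod (2 * n)) : centralSym n {u, v} = {u + n, v + n} := by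
  simp [centralSym, Finset.image_insert]

theorem centralSym_centralSym (e : Finset (ZMod (2 * n))) :
    centralSym n (centralSym n e) = e := by
  simp only [centralSym, Finset.image_image, Function.comp_def, add_assoc,
    natCast_add_natCast_self, add_zero, Finset.image_id']

theorem centralSym_chord (a : ZMod (2 * n)) (i j : ℕ) :
    centralSym n (chord a i j) = chord a (i + n) (j + n) := by
  simp [chord, centralSym_pair, add_assoc]

theorem isDiag_centralSym {e : Finset (ZMod (2 * n))} (he : IsDiag (2 * n) e) :
    IsDiag (2 * n) (centralSym n e) := by
  obtain ⟨u, v, rfl, -⟩ := id he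
  simpa only [centralSym_pair, isDiag_pair_iff, Ne, add_right_comm _ (n : ZMod (2 * n)) 1,
    add_left_inj] using he

theorem IsDiameter.centralSym_eq {e : Finset (ZMod (2 * n))} (he : IsDiameter n e) :
    centralSym n e = e := by
  obtain ⟨u, rfl⟩ := he
  rw [centralSym_pair, add_assoc, natCast_add_natCast_self, add_zero, Finset.pair_comm]

theorem crosses_centralSym {e f : Finset (ZMod (2 * n))} (h : Crosses (2 * n) e f) :
    Crosses (2 * n) (centralSym n e) (centralSym n f) := by
  obtain ⟨a, b, c, d, rfl, rfl, hc, hd⟩ := h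
  exact ⟨a + n, b + n, c + n, d + n, centralSym_pair a b, centralSym_pair c d,
    by simpa only [StrictBtw, add_sub_add_right_eq_sub] using hc,
    by simpa only [StrictBtw, add_sub_add_right_eq_sub] using hd⟩

theorem crosses_centralSym_left_iff {e f : Finset (ZMod (2 * n))} :
    Crosses (2 * n) (centralSym n e) f ↔ Crosses (2 * n) e (centralSym n f) :=
  ⟨fun h => by simpa only [centralSym_centralSym] using crosses_centralSym h,
    fun h => by simpa only [centralSym_centralSym] using crosses_centralSym h⟩

theorem isDiameter_chord_add (a : ZMod (2 * n)) (i : ℕ) : IsDiameter n (chord a i (i + n)) :=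
  ⟨a + i, by simp [chord, add_assoc]⟩

theorem isDiameter_chord_zero (a : ZMod (2 * n)) : IsDiameter n (chord a 0 n) := by
  simpa only [zero_add] using isDiameter_chord_add a 0

theorem isDiameter_pair_iff {u v : ZMod (2 * n)} : IsDiameter n {u, v} ↔ v = u + n := by
  constructor
  · rintro ⟨w, h⟩
    rcases finset_pair_eq_pair_iff.1 h with ⟨rfl, rfl⟩ | ⟨rfl, rfl⟩
    · rfl
    · rw [add_assoc, natCast_add_natCast_self, add_zero]
  · rintro rfl
    exact ⟨u, rfl⟩

theorem isDiameter_chord_iff (a : ZMod (2 * n)) {i j : ℕ} (hij : i < j) (hj : j < 2 * n) :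
    IsDiameter n (chord a i j) ↔ j = i + n := by
  rw [chord, isDiameter_pair_iff, add_assoc, add_right_inj, ← Nat.cast_add,
    natCast_eq_natCast_iff_of_lt_two_mul hj (by omega)]
  omega

end CentralSym

/-! ### The half-polygon cut off by a diameter -/

section Half

variable {n : ℕ} (a : ZMod (2 * n)) {i j k l : ℕ}

theorem exists_centralSym_chord_eq (hkl : k < l) (hl : l ≤ n) :
    ∃ k' l', k' < l' ∧ l' < 2 * n ∧ centralSym n (chord a k l) = chord a k' l' ∧
      (k' = k + n ∧ l' = l + n ∨ l = n ∧ k' = 0 ∧ l' = k + n) := by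
  rw [centralSym_chord]
  rcases hl.lt_or_eq with hlt | rfl
  · exact ⟨k + n, l + n, by omega, by omega, rfl, by omega⟩
  · exact ⟨0, k + l, by omega, by omega, by rw [← two_mul, chord_card_right], by omega⟩

theorem chord_ne_centralSym_chord (hij : i < j) (hj : j ≤ n) (hkl : k < l) (hl : l ≤ n)
    (hdiam : ¬ (k = 0 ∧ l = n)) : chord a i j ≠ centralSym n (chord a k l) := by
  obtain ⟨k', l', hkl', hl', heq, hcase⟩ := exists_centralSym_chord_eq a hkl hl
  rw [heq, Ne, chord_eq_chord_iff a hij (by omega) hkl' hl']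
  omega

theorem not_crosses_centralSym_chord (hij : i < j) (hj : j ≤ n) (hkl : k < l) (hl : l ≤ n) :
    ¬ Crosses (2 * n) (chord a i j) (centralSym n (chord a k l)) := by
  obtain ⟨k', l', hkl', hl', heq, hcase⟩ := exists_centralSym_chord_eq a hkl hl
  rw [heq, crosses_chord_iff a hij (by omega) hkl' hl', Interlaced]
  omega

theorem IsDiag.exists_chord_of_not_crosses [NeZero n] {e : Finset (ZMod (2 * n))}
    (he : IsDiag (2 * n) e) (hcross : ¬ Crosses (2 * n) (chord a 0 n) e) :
    ∃ i j, i < j ∧ j ≤ n ∧ (e = chord a i j ∨ e = centralSym n (chord a i j)) := by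
  have hn : 0 < n := Nat.pos_of_neZero n
  obtain ⟨i, j, hij, hj, rfl⟩ := he.exists_eq_chord a
  rw [crosses_chord_iff a hn (by omega) hij hj, Interlaced] at hcross
  rcases le_or_gt j n with hjn | hjn
  · exact ⟨i, j, hij, hjn, .inl rfl⟩
  obtain ⟨l, rfl⟩ := Nat.exists_eq_add_of_le' hjn.le
  simp only [centralSym_chord]
  rcases i.eq_zero_or_pos with rfl | hi
  · exact ⟨l, n, by omega, le_rfl, .inr (by rw [← two_mul, chord_card_right])⟩
  · obtain ⟨k, rfl⟩ := Nat.exists_eq_add_of_le' (show n ≤ i by omega)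
    exact ⟨k, l, by omega, by omega, .inr rfl⟩

end Half

/-! ### Elements of the type `D_n` model -/

section Model

variable {n : ℕ}

/-- The diameter `e` colored by `c`, where `true` is red and `false` is blue. -/
def colored (c : Bool) (e : Finset (ZMod (2 * n))) : DElem n :=
  if c then .red e else .blue e

/-- The pair formed by a diagonal and its image under the central symmetry. -/
def symPair (e : Finset (ZMod (2 * n))) : DElem n :=
  .pair {e, centralSym n e}

variable {c d : Bool} {e f : Finset (ZMod (2 * n))}

theorem memM_colored_iff : memM n (colored c e) ↔ IsDiag (2 * n) e ∧ IsDiameter n e := by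
  cases c <;> rfl

theorem colored_eq_colored_iff : colored c e = colored d f ↔ c = d ∧ e = f := by
  cases c <;> cases d <;> simp [colored]

theorem colored_ne_symPair : colored c e ≠ symPair f := by
  cases c <;> simp [colored, symPair]

theorem symPair_eq_symPair_iff : symPair e = symPair f ↔ e = f ∨ e = centralSym n f := by
  have hsymm : centralSym n e = f ↔ e = centralSym n f :=
    ⟨fun h => h ▸ (centralSym_centralSym e).symm, fun h => h ▸ centralSym_centralSym f⟩
  simp only [symPair, DElem.pair.injEq, finset_pair_eq_pair_iff, hsymm]
  grind

theorem symPair_centralSym : symPair (centralSym n e) = symPair e :=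
  symPair_eq_symPair_iff.2 (.inr rfl)

theorem colored_compat_colored_iff :
    DCompat n (colored c e) (colored d f) ↔ c = d ∨ e = f := by
  cases c <;> cases d <;> simp [colored, DCompat]

theorem colored_compat_symPair_iff (he : IsDiameter n e) :
    DCompat n (colored c e) (symPair f) ↔ ¬ Crosses (2 * n) e f := by
  have hsymm : Crosses (2 * n) e (centralSym n f) ↔ Crosses (2 * n) e f := by
    rw [← crosses_centralSym_left_iff, he.centralSym_eq]
  cases c <;> simp [colored, symPair, DCompat, hsymm]

theorem symPair_compat_colored_iff (he : IsDiameter n e) :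
    DCompat n (symPair f) (colored c e) ↔ ¬ Crosses (2 * n) e f := by
  rw [← colored_compat_symPair_iff (c := c) he]
  cases c <;> rfl

theorem symPair_compat_symPair_iff :
    DCompat n (symPair e) (symPair f) ↔
      ¬ Crosses (2 * n) e f ∧ ¬ Crosses (2 * n) e (centralSym n f) := by
  simp only [symPair, DCompat, Finset.mem_insert, Finset.mem_singleton, forall_eq_or_imp,
    forall_eq, crosses_centralSym_left_iff, centralSym_centralSym]
  tauto

end Model

/-! ### The link of a diameter -/

section Link

variable {n : ℕ} (a : ZMod (2 * n)) (c : Bool)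

/-- The elements of the type `D_n` model that are different from and compatible with `x`. -/
abbrev Link (x : MSet n) : Type := {y : MSet n // y ≠ x ∧ DCompat n x.1 y.1}

/-- The element of the link of the diameter `{a, a + n}` of color `c` that corresponds to a
diagonal of the `(n + 2)`-gon, whose vertices `0, …, n` are the vertices `a, …, a + n` and whose
vertex `n + 1` is the apex. -/
def linkElem (p : DiagIndex (n + 2)) : DElem n :=
  if p.snd = n + 1 then colored c (chord a p.fst (p.fst + n))
  else if p.fst = 0 ∧ p.snd = n then colored (!c) (chord a 0 n)
  else symPair (chord a p.fst p.snd)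

theorem memM_linkElem (p : DiagIndex (n + 2)) : memM n (linkElem a c p) := by
  obtain ⟨i, j, hle, hlt, hside⟩ := p
  simp only [linkElem]
  split_ifs with hapex hbase
  · refine memM_colored_iff.2 ⟨?_, isDiameter_chord_add a _⟩
    rw [isDiag_chord_iff] <;> omega
  · refine memM_colored_iff.2 ⟨?_, isDiameter_chord_zero a⟩
    rw [isDiag_chord_iff] <;> omega
  · refine ⟨_, ?_, ?_, rfl⟩
    · rw [isDiag_chord_iff] <;> omega
    · rw [isDiameter_chord_iff] <;> omega

theorem linkElem_ne (p : DiagIndex (n + 2)) : linkElem a c p ≠ colored c (chord a 0 n) := by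
  obtain ⟨i, j, hle, hlt, hside⟩ := p
  simp only [linkElem]
  split_ifs with hapex hbase
  · rw [Ne, colored_eq_colored_iff, chord_eq_chord_iff] <;> omega
  · simp [colored_eq_colored_iff]
  · exact colored_ne_symPair.symm

theorem compat_linkElem (p : DiagIndex (n + 2)) :
    DCompat n (colored c (chord a 0 n)) (linkElem a c p) := by
  obtain ⟨i, j, hle, hlt, hside⟩ := p
  simp only [linkElem]
  split_ifs with hapex hbase
  · exact colored_compat_colored_iff.2 (.inl rfl)
  · exact colored_compat_colored_iff.2 (.inr rfl)
  · rw [colored_compat_symPair_iff (isDiameter_chord_zero a), crosses_chord_iff, Interlaced] <;>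
      omega

theorem linkElem_injective : Function.Injective (linkElem a c) := by
  rintro ⟨i, j, hij, hj, hside⟩ ⟨k, l, hkl, hl, hside'⟩ h
  suffices i = k ∧ j = l from DiagIndex.ext this.1 this.2
  simp only [linkElem] at h
  -- The cases run through the kinds of the two elements in the order apex, base, inside the half.
  split_ifs at h
  · rw [colored_eq_colored_iff, chord_eq_chord_iff] at h <;> omega
  · simp [colored_eq_colored_iff] at h
  · exact absurd h colored_ne_symPair
  · simp [colored_eq_colored_iff] at h
  · omega
  · exact absurd h colored_ne_symPair
  · exact absurd h.symm colored_ne_symPair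
  · exact absurd h.symm colored_ne_symPair
  · have heq := (symPair_eq_symPair_iff.1 h).resolve_right <|
      chord_ne_centralSym_chord a (by omega) (by omega) (by omega) (by omega) (by omega)
    rwa [chord_eq_chord_iff] at heq <;> omega

theorem exists_linkElem_eq_colored [NeZero n] {d : Bool} {e : Finset (ZMod (2 * n))}
    (hmem : memM n (colored d e)) (hne : colored d e ≠ colored c (chord a 0 n))
    (hcompat : DCompat n (colored c (chord a 0 n)) (colored d e)) :
    ∃ p, linkElem a c p = colored d e := by
  obtain ⟨hdiag, hdiam⟩ := memM_colored_iff.1 hmem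
  obtain ⟨i, j, hij, hj, rfl⟩ := hdiag.exists_eq_chord a
  obtain rfl := (isDiameter_chord_iff a hij hj).1 hdiam
  have hle := ((isDiag_chord_iff a hij hj).1 hdiag).1
  rcases eq_or_ne c d with rfl | hcd
  · have hi : i ≠ 0 := by
      rintro rfl
      simp at hne
    exact ⟨⟨i, n + 1, by omega, by omega, by omega⟩, if_pos rfl⟩
  · obtain rfl : d = !c := Bool.eq_not.2 hcd.symm
    rw [← (colored_compat_colored_iff.1 hcompat).resolve_left hcd]
    exact ⟨⟨0, n, by omega, by omega, by omega⟩, by simp [linkElem]⟩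

theorem exists_linkElem_eq_pair [NeZero n] {s : Finset (Finset (ZMod (2 * n)))}
    (hmem : memM n (.pair s)) (hcompat : DCompat n (colored c (chord a 0 n)) (.pair s)) :
    ∃ p, linkElem a c p = .pair s := by
  obtain ⟨e, hdiag, hdiam, rfl⟩ := hmem
  change ∃ p, linkElem a c p = symPair e
  obtain ⟨i, j, hij, hj, he⟩ := hdiag.exists_chord_of_not_crosses a <|
    (colored_compat_symPair_iff (isDiameter_chord_zero a)).1 hcompat
  have hn : 0 < n := Nat.pos_of_neZero n
  obtain ⟨hdiag', hdiam', hpair⟩ : IsDiag (2 * n) (chord a i j) ∧ ¬ IsDiameter n (chord a i j) ∧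
      symPair (chord a i j) = symPair e := by
    rcases he with rfl | rfl
    · exact ⟨hdiag, hdiam, rfl⟩
    · refine ⟨?_, fun h => hdiam ?_, symPair_centralSym.symm⟩
      · simpa only [centralSym_centralSym] using isDiag_centralSym hdiag
      · rwa [h.centralSym_eq]
  rw [isDiag_chord_iff a hij (by omega)] at hdiag'
  rw [isDiameter_chord_iff a hij (by omega)] at hdiam'
  refine ⟨⟨i, j, hdiag'.1, by omega, by omega⟩, ?_⟩
  rw [linkElem, if_neg (by dsimp only; omega), if_neg (by dsimp only; omega), hpair]

theorem exists_linkElem_eq [NeZero n] {y : DElem n} (hmem : memM n y)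
    (hne : y ≠ colored c (chord a 0 n)) (hcompat : DCompat n (colored c (chord a 0 n)) y) :
    ∃ p, linkElem a c p = y := by
  cases y with
  | pair s => exact exists_linkElem_eq_pair a c hmem hcompat
  | red e => exact exists_linkElem_eq_colored a c (d := true) hmem hne hcompat
  | blue e => exact exists_linkElem_eq_colored a c (d := false) hmem hne hcompat

theorem linkElem_compat_linkElem_iff {p q : DiagIndex (n + 2)} (hpq : p ≠ q) :
    DCompat n (linkElem a c p) (linkElem a c q) ↔ ¬ Interlaced p.fst p.snd q.fst q.snd := by
  obtain ⟨i, j, hij, hj, hside⟩ := p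
  obtain ⟨k, l, hkl, hl, hside'⟩ := q
  rw [Ne, DiagIndex.mk.injEq] at hpq
  have hdiam := isDiameter_chord_add a
  have hdiam₀ := isDiameter_chord_zero a
  simp only [linkElem, Interlaced]
  -- The cases run through the kinds of the two elements in the order apex, base, inside the half.
  split_ifs
  · simp only [colored_compat_colored_iff, true_or, true_iff]
    omega
  · rw [colored_compat_colored_iff, or_iff_right (by simp), chord_eq_chord_iff] <;> omega
  · rw [colored_compat_symPair_iff (hdiam i), crosses_chord_iff, Interlaced] <;> omega
  · rw [colored_compat_colored_iff, or_iff_right (by simp), chord_eq_chord_iff] <;> omega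
  · omega
  · rw [colored_compat_symPair_iff hdiam₀, crosses_chord_iff, Interlaced] <;> omega
  · rw [symPair_compat_colored_iff (hdiam k), crosses_chord_iff, Interlaced] <;> omega
  · rw [symPair_compat_colored_iff hdiam₀, crosses_chord_iff, Interlaced] <;> omega
  · have hhalf := not_crosses_centralSym_chord a (i := i) (j := j) (k := k) (l := l)
      (by omega) (by omega) (by omega) (by omega)
    rw [symPair_compat_symPair_iff, and_iff_left hhalf, crosses_chord_iff, Interlaced] <;> omega

/-- The correspondence of `linkElem` between the diagonals of the `(n + 2)`-gon and the link of
the diameter `{a, a + n}` of color `c`. -/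
noncomputable def linkEquiv [NeZero n] {x : MSet n} (hx : x.1 = colored c (chord a 0 n)) :
    DiagIndex (n + 2) ≃ Link x :=
  Equiv.ofBijective
    (fun p => ⟨⟨linkElem a c p, memM_linkElem a c p⟩,
      fun h => linkElem_ne a c p (hx ▸ congrArg Subtype.val h), hx ▸ compat_linkElem a c p⟩) <| by
    constructor
    · intro p q h
      exact linkElem_injective a c (congrArg (fun y : Link x => y.1.1) h)
    · rintro ⟨⟨y, hy⟩, hne, hcompat⟩
      obtain ⟨p, rfl⟩ := exists_linkElem_eq a c hy
        (fun h => hne (Subtype.ext (h.trans hx.symm))) (hx ▸ hcompat)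
      exact ⟨p, rfl⟩

theorem exists_eq_colored_chord {x : MSet n}
    (hx : ∃ e, x.1 = DElem.red e ∨ x.1 = DElem.blue e) :
    ∃ (a : ZMod (2 * n)) (c : Bool), x.1 = colored c (chord a 0 n) := by
  obtain ⟨c, e, hce⟩ : ∃ c e, x.1 = colored c e := by
    obtain ⟨e, h | h⟩ := hx
    exacts [⟨true, e, h⟩, ⟨false, e, h⟩]
  obtain ⟨-, a, rfl⟩ := memM_colored_iff.1 (hce ▸ x.2)
  exact ⟨a, c, by simpa [chord] using hce⟩

end Link

/-- the link of a colored diameter in the type `D_n` model is isomorphic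
to the type `A_{n-1}` model, i.e. the diagonals of a convex `(n+2)`-gon. -/
theorem link_of_diameter (n : ℕ) (hn : 2 ≤ n) (x : MSet n)
    (hx : ∃ e, x.1 = DElem.red e ∨ x.1 = DElem.blue e) :
    ∃ β : {y : MSet n // y ≠ x ∧ DCompat n x.1 y.1} ≃
          {e : Finset (ZMod (n + 2)) // IsDiag (n + 2) e},
      ∀ y₁ y₂, y₁ ≠ y₂ →
        (DCompat n y₁.1.1 y₂.1.1 ↔ ¬ Crosses (n + 2) (β y₁).1 (β y₂).1) := by
  have : NeZero n := ⟨by omega⟩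
  obtain ⟨a, c, hxa⟩ := exists_eq_colored_chord hx
  let γ := linkEquiv a c hxa
  refine ⟨γ.symm.trans (diagEquiv 0), fun y₁ y₂ hne => ?_⟩
  obtain ⟨p, rfl⟩ := γ.surjective y₁
  obtain ⟨q, rfl⟩ := γ.surjective y₂
  have hpq : p ≠ q := fun h => hne (h ▸ rfl)
  simp only [Equiv.trans_apply, Equiv.symm_apply_apply, crosses_diagEquiv_iff]
  exact linkElem_compat_linkElem_iff a c hpq

end GalD
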